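/- arXiv:1704.02595 — 2 statements merged into one kernel-verified Lean document; each statement's English description precedes it below -/
import Mathlib

section
/- Let Γ be a finitely generated sofic group. Then there exist a finite set K with at least two elements, a nonempty closed Γ-invariant subset Y ⊆ K^Γ (for the shift action) on which Γ acts freely (i.e., for y ∈ Y and g ≠ 1 one has g·y ≠ y), and a Γ-invariant Borel probability measure on Y. -/
open MeasureTheory

/-- The word length of an element of a free group (length of its reduced word). -/
def wordLength {n : ℕ} (w : FreeGroup (Fin n)) : ℕ := (FreeGroup.toWord w).length

/-- `p` is a `(Γ,r)`-vertex of the action `ρ` of the free group on a finite set: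
two words of length at most `r` move `p` to the same point iff they have the same
image in `Γ`. -/
def IsGammaRVertex {Γ : Type} [Group Γ] {n : ℕ} (γ : Fin n → Γ) {V : Type}
    (ρ : FreeGroup (Fin n) →* Equiv.Perm V) (r : ℕ) (p : V) : Prop :=
  ∀ w w' : FreeGroup (Fin n), wordLength w ≤ r → wordLength w' ≤ r →
    (ρ w p = ρ w' p ↔ FreeGroup.lift γ w = FreeGroup.lift γ w')

/-- `Γ` is sofic with respect to the generating tuple `γ`: for every `r ≥ 1` and `ε > 0`
there is a finite nonempty set with an action of the free group in which at least a
`(1-ε)` proportion of the points are `(Γ,r)`-vertices. -/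
def IsSofic {Γ : Type} [Group Γ] {n : ℕ} (γ : Fin n → Γ) : Prop :=
  ∀ r : ℕ, 1 ≤ r → ∀ ε : ℝ, 0 < ε →
    ∃ (V : Type) (_ : Fintype V) (_ : Nonempty V)
      (ρ : FreeGroup (Fin n) →* Equiv.Perm V),
      (1 - ε) * (Fintype.card V : ℝ) ≤
        ({p : V | IsGammaRVertex γ ρ r p}.ncard : ℝ)

/-- The (left) shift action of `Γ` on `Γ → K`. -/
def shiftMap {Γ : Type} [Group Γ] {K : Type} (g : Γ) (f : Γ → K) : Γ → K :=
  fun x => f (g⁻¹ * x)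

/-- If membership in `G` does not depend on the coordinates in `A`, and the elements of `B ⊆ G` are
determined by their coordinates outside `A`, then `B` is smaller than `G` by a factor `|K| ^ |A|`. -/
lemma card_mul_pow_le_card_of_determined {V K : Type*} [Fintype K] (G B : Finset (V → K))
    (A : Finset V) (hBG : B ⊆ G) (hG : ∀ c ∈ G, ∀ c', (∀ v ∉ A, c' v = c v) → c' ∈ G)
    (hB : ∀ c ∈ B, ∀ c' ∈ B, (∀ v ∉ A, c v = c' v) → c = c') :
    B.card * Fintype.card K ^ A.card ≤ G.card := by
  classical
  have hcard : (B ×ˢ (Finset.univ : Finset (A → K))).card = B.card * Fintype.card K ^ A.card := by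
    simp [Finset.card_product]
  rw [← hcard]
  refine Finset.card_le_card_of_injOn
    (fun q v => if h : v ∈ A then q.2 ⟨v, h⟩ else q.1 v) ?_ ?_
  · rintro ⟨c, x⟩ hc
    simp only [Finset.coe_product, Set.mem_prod, Finset.mem_coe] at hc
    exact hG c (hBG hc.1) _ fun v hv => by simp [hv]
  · rintro ⟨c, x⟩ hc ⟨c', x'⟩ hc' h
    simp only [Finset.coe_product, Set.mem_prod, Finset.mem_coe] at hc hc'
    have hcc : c = c' := hB c hc.1 c' hc'.1 fun v hv => by simpa [hv] using congrFun h v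
    have hxx : x = x' := by
      funext ⟨v, hv⟩
      simpa [hv] using congrFun h v
    rw [hcc, hxx]

/-- A counting form of the local lemma: `bad i` is a set of colorings of `V` depending only on the
coordinates in `U i`, and near every point of `U i` some `k i` coordinates of a bad coloring are
determined by the others. If every point lies in few of the sets `U i`, weighted by `k i`,
then some coloring is not bad. -/
theorem exists_coloring_forall_notMem_bad {V K ι : Type*} [Fintype V] [Fintype K]
    (I : Finset ι) (bad : ι → Set (V → K)) (U : ι → Finset V) (k : ι → ℕ)
    (hlocal : ∀ i ∈ I, ∀ c c' : V → K, (∀ v ∈ U i, c' v = c v) → c ∈ bad i → c' ∈ bad i)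
    (hU : ∀ i ∈ I, (U i).Nonempty)
    (hdet : ∀ i ∈ I, ∀ v ∈ U i, ∃ A ⊆ U i, v ∈ A ∧ A.card = k i ∧
      ∀ c ∈ bad i, ∀ c' ∈ bad i, (∀ w ∉ A, c w = c' w) → c = c')
    (hsum : ∀ v, ∀ J ⊆ I, (∀ i ∈ J, v ∈ U i) →
      ∑ i ∈ J, (1 / 2 : ℝ) ^ (k i - 1) + 2 ≤ Fintype.card K) :
    ∃ c : V → K, ∀ i ∈ I, c ∉ bad i := by
  classical
  let G : Finset V → Finset (V → K) := fun S =>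
    Finset.univ.filter fun c => ∀ i ∈ I, U i ⊆ S → c ∉ bad i
  have hG : ∀ S c, c ∈ G S ↔ ∀ i ∈ I, U i ⊆ S → c ∉ bad i := fun S c => by simp [G]
  set m : ℝ := (Fintype.card K : ℝ) with hm
  obtain hV | ⟨⟨v₀⟩⟩ := isEmpty_or_nonempty V
  · exact ⟨fun v => (hV.false v).elim, fun i hi => ((hU i hi).elim fun v _ => (hV.false v).elim)⟩
  have hm2 : 2 ≤ m := by simpa using hsum v₀ ∅ (by simp) (by simp)
  have hm0 : 0 < m := by linarith
  have hstep : ∀ S v, v ∉ S →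
      (∀ S' ⊆ S, (2 / m) ^ (S \ S').card * ((G S').card : ℝ) ≤ (G S).card) →
      2 / m * ((G S).card : ℝ) ≤ (G (insert v S)).card := by
    intro S v hv ih
    let J := I.filter fun i => v ∈ U i ∧ U i ⊆ insert v S
    have hcover : G S ⊆ G (insert v S) ∪ J.biUnion fun i => (G S).filter (· ∈ bad i) := by
      intro c hc
      by_contra hcon
      simp only [Finset.mem_union, Finset.mem_biUnion, Finset.mem_filter, not_or, not_exists,
        not_and, J] at hcon
      refine hcon.1 ((hG _ _).2 fun i hi hiS hbad => ?_)
      by_cases hvi : v ∈ U i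
      · exact hcon.2 i ⟨hi, hvi, hiS⟩ hc hbad
      · exact (hG _ _).1 hc i hi ((Finset.subset_insert_iff_of_notMem hvi).1 hiS) hbad
    have hone : ∀ i ∈ J, (((G S).filter (· ∈ bad i)).card : ℝ) ≤
        (1 / 2) ^ (k i - 1) / m * (G S).card := by
      intro i hi
      obtain ⟨hiI, hvi, hiS⟩ := Finset.mem_filter.1 hi
      obtain ⟨A, hAU, hvA, hAk, hA⟩ := hdet i hiI v hvi
      have h1 : ((G (S \ A)).filter (· ∈ bad i)).card * Fintype.card K ^ A.card ≤
          (G (S \ A)).card := by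
        refine card_mul_pow_le_card_of_determined _ _ A (Finset.filter_subset _ _) ?_ ?_
        · intro c hc c' hcc
          refine (hG _ _).2 fun j hj hjS hbad => (hG _ _).1 hc j hj hjS ?_
          exact hlocal j hj c' c (fun w hw => (hcc w (Finset.mem_sdiff.1 (hjS hw)).2).symm) hbad
        · intro c hc c' hc' hcc
          exact hA c (Finset.mem_filter.1 hc).2 c' (Finset.mem_filter.1 hc').2 hcc
      have h2 : ((G S).filter (· ∈ bad i)).card ≤ ((G (S \ A)).filter (· ∈ bad i)).card := by
        refine Finset.card_le_card (Finset.filter_subset_filter _ fun c hc => ?_)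
        exact (hG _ _).2 fun j hj hjS => (hG _ _).1 hc j hj (hjS.trans Finset.sdiff_subset)
      have h3 : (S \ (S \ A)).card = k i - 1 := by
        have : S \ (S \ A) = A.erase v := by
          ext w
          have := @hAU w
          have := @hiS w
          simp only [Finset.mem_sdiff, Finset.mem_erase, Finset.mem_insert] at *
          grind
        rw [this, Finset.card_erase_of_mem hvA, hAk]
      have h4 := ih (S \ A) Finset.sdiff_subset
      rw [h3] at h4
      have hk : k i = (k i - 1) + 1 := by
        have := Finset.card_pos.2 ⟨v, hvA⟩
        omega
      have h5 : (((G S).filter (· ∈ bad i)).card : ℝ) * m ^ (k i) ≤ (G (S \ A)).card := by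
        rw [hm, ← hAk]
        exact_mod_cast (Nat.mul_le_mul_right _ h2).trans h1
      have h6 : (2 / m) ^ (k i - 1) * ((((G S).filter (· ∈ bad i)).card : ℝ) * m ^ (k i)) ≤
          (G S).card := (mul_le_mul_of_nonneg_left h5 (by positivity)).trans h4
      have h7 : (2 / m) ^ (k i - 1) * m ^ (k i) = 2 ^ (k i - 1) * m := by
        conv_lhs => rw [hk]
        rw [Nat.add_sub_cancel, pow_succ, div_pow]
        field_simp
      have h8 : (((G S).filter (· ∈ bad i)).card : ℝ) * (2 ^ (k i - 1) * m) ≤ (G S).card := by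
        rw [← h7]; linarith
      rw [one_div, inv_pow, inv_eq_one_div, div_div, one_div_mul_eq_div,
        le_div_iff₀ (by positivity)]
      exact h8
    have hcard : ((G S).card : ℝ) ≤ (G (insert v S)).card +
        (∑ i ∈ J, (1 / 2 : ℝ) ^ (k i - 1)) / m * (G S).card := by
      calc ((G S).card : ℝ) ≤ ((G (insert v S)).card +
            ∑ i ∈ J, ((G S).filter (· ∈ bad i)).card : ℕ) := by
            exact_mod_cast (Finset.card_le_card hcover).trans
              ((Finset.card_union_le _ _).trans (Nat.add_le_add_left Finset.card_biUnion_le _))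
        _ ≤ _ := by
            push_cast
            rw [Finset.sum_div, Finset.sum_mul]
            gcongr with i hi
            exact hone i hi
    have hJ := hsum v J (Finset.filter_subset _ _) fun i hi => (Finset.mem_filter.1 hi).2.1
    have hJ' : (∑ i ∈ J, (1 / 2 : ℝ) ^ (k i - 1)) / m ≤ 1 - 2 / m := by
      rw [div_le_iff₀ hm0, sub_mul, div_mul_cancel₀ _ hm0.ne']
      linarith
    have := mul_le_mul_of_nonneg_right hJ' (Nat.cast_nonneg (α := ℝ) (G S).card)
    linarith
  have hmain : ∀ S S', S' ⊆ S → (2 / m) ^ (S \ S').card * ((G S').card : ℝ) ≤ (G S).card := by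
    intro S
    induction S using Finset.strongInduction with
    | H S ih =>
      intro S' hS'
      obtain rfl | hne := eq_or_ne S' S
      · simp
      obtain ⟨v, hvS, hvS'⟩ := Finset.exists_of_ssubset (hS'.ssubset_of_ne hne)
      have hss := Finset.erase_ssubset hvS
      have h1 := hstep (S.erase v) v (Finset.notMem_erase v S) (ih _ hss)
      rw [Finset.insert_erase hvS] at h1
      have h2 := ih _ hss S' (Finset.subset_erase.2 ⟨hS', hvS'⟩)
      have h3 : (S \ S').card = (S.erase v \ S').card + 1 := by
        rw [Finset.erase_sdiff_comm, Finset.card_erase_add_one]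
        exact Finset.mem_sdiff.2 ⟨hvS, hvS'⟩
      rw [h3, pow_succ']
      calc _ = 2 / m * ((2 / m) ^ (S.erase v \ S').card * ((G S').card : ℝ)) := by ring
        _ ≤ 2 / m * ((G (S.erase v)).card : ℝ) := by gcongr
        _ ≤ _ := h1
  have hempty : 0 < (G ∅).card := by
    have : Nonempty K := by
      rw [← Fintype.card_pos_iff]
      exact Nat.cast_pos.1 (hm ▸ hm0)
    refine Finset.card_pos.2 ⟨fun _ => Classical.arbitrary K, (hG _ _).2 fun i hi hi0 => ?_⟩
    exact absurd (Finset.subset_empty.1 hi0) (hU i hi).ne_empty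
  have hpos : (0 : ℝ) < (G Finset.univ).card :=
    lt_of_lt_of_le (by positivity) (hmain Finset.univ ∅ (Finset.empty_subset _))
  obtain ⟨c, hc⟩ := Finset.card_pos.1 (Nat.cast_pos.1 hpos)
  exact ⟨c, fun i hi => (hG _ _).1 hc i hi (Finset.subset_univ _)⟩

/-- In an infinite group, every `g ≠ 1` translates some finite set of each given size
off itself. -/
lemma exists_finset_card_eq_forall_ne_mul {Γ : Type*} [Group Γ] [Infinite Γ] {g : Γ} (hg : g ≠ 1)
    (n : ℕ) : ∃ T : Finset Γ, T.card = n ∧ ∀ t ∈ T, ∀ s ∈ T, t ≠ g * s := by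
  classical
  induction n with
  | zero => exact ⟨∅, by simp⟩
  | succ n ih =>
    obtain ⟨T, hTn, hT⟩ := ih
    obtain ⟨x, hx⟩ := Infinite.exists_notMem_finset
      (T ∪ T.image (g * ·) ∪ T.image (g⁻¹ * ·))
    simp only [Finset.mem_union, Finset.mem_image, not_or, not_exists, not_and] at hx
    refine ⟨insert x T, by rw [Finset.card_insert_of_notMem hx.1.1, hTn], fun t ht s hs => ?_⟩
    rcases Finset.mem_insert.1 ht with rfl | htT <;> rcases Finset.mem_insert.1 hs with rfl | hsT
    · simpa using hg
    · exact fun h => hx.1.2 s hsT h.symm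
    · exact fun h => hx.2 t htT (by rw [h, inv_mul_cancel_left])
    · exact hT t htT s hsT

lemma exists_family_finset_forall_ne_mul_summable (Γ : Type*) [Group Γ] [Countable Γ] :
    ∃ T : Γ → Finset Γ,
      (∀ g, g ≠ 1 → (T g).Nonempty ∧ ∀ t ∈ T g, ∀ s ∈ T g, t ≠ g * s) ∧
      Summable fun g => 2 * ((T g).card : ℝ) * (1 / 2) ^ ((T g).card - 1) := by
  obtain hfin | hinf := finite_or_infinite Γ
  · refine ⟨fun _ => {1}, fun g hg => ⟨Finset.singleton_nonempty _, ?_⟩, Summable.of_finite⟩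
    simpa using hg.symm
  · obtain ⟨e, he⟩ := exists_injective_nat Γ
    have h : ∀ g : Γ, ∃ T : Finset Γ, g ≠ 1 →
        T.card = e g + 1 ∧ ∀ t ∈ T, ∀ s ∈ T, t ≠ g * s := fun g => by
      by_cases hg : g = 1
      · exact ⟨∅, fun h => (h hg).elim⟩
      · obtain ⟨T, hT⟩ := exists_finset_card_eq_forall_ne_mul hg (e g + 1)
        exact ⟨T, fun _ => hT⟩
    choose T hT using h
    refine ⟨T, fun g hg => ⟨Finset.card_pos.1 (by rw [(hT g hg).1]; omega), (hT g hg).2⟩, ?_⟩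
    have hs : Summable fun n : ℕ => 2 * ((n : ℝ) + 1) * (1 / 2) ^ n := by
      have h1 : Summable fun n : ℕ => (n : ℝ) ^ 1 * (1 / 2) ^ n :=
        summable_pow_mul_geometric_of_norm_lt_one 1 (by norm_num)
      have h2 : Summable fun n : ℕ => (1 / 2 : ℝ) ^ n := summable_geometric_two
      refine ((h1.add h2).mul_left 2).congr fun n => ?_
      ring
    refine (summable_congr_cofinite ?_).2 (hs.comp_injective he)
    filter_upwards [(Set.finite_singleton (1 : Γ)).compl_mem_cofinite] with g hg
    simp [(hT g hg).1]

/-- The points of a sofic approximation at which a given finite set of words is faithful to `Γ`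
have proportion arbitrarily close to one. -/
lemma IsSofic.exists_action_faithful_on_finset {Γ : Type} [Group Γ] {n : ℕ} {γ : Fin n → Γ}
    (h : IsSofic γ) (W : Finset (FreeGroup (Fin n))) {ε : ℝ} (hε : 0 < ε) :
    ∃ (V : Type) (_ : Fintype V) (_ : Nonempty V) (ρ : FreeGroup (Fin n) →* Equiv.Perm V)
      (B : Finset V), (B.card : ℝ) ≤ ε * Fintype.card V ∧
      ∀ p ∉ B, ∀ w ∈ W, ∀ w' ∈ W,
        (ρ w p = ρ w' p ↔ FreeGroup.lift γ w = FreeGroup.lift γ w') := by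
  classical
  obtain ⟨V, hV, hV', ρ, hρ⟩ := h (W.sup wordLength + 1) (by omega) ε hε
  refine ⟨V, hV, hV', ρ, Finset.univ.filter
    fun p => ¬ IsGammaRVertex γ ρ (W.sup wordLength + 1) p, ?_, fun p hp w hw w' hw' => ?_⟩
  · have h1 : {p : V | IsGammaRVertex γ ρ (W.sup wordLength + 1) p}.ncard =
        (Finset.univ.filter fun p => IsGammaRVertex γ ρ (W.sup wordLength + 1) p).card := by
      rw [← Set.ncard_coe_finset]
      simp
    have h2 := Finset.card_filter_add_card_filter_not (s := (Finset.univ : Finset V))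
      (fun p => IsGammaRVertex γ ρ (W.sup wordLength + 1) p)
    rw [← h1, Finset.card_univ] at h2
    have h3 := congrArg (Nat.cast (R := ℝ)) h2
    push_cast at h3
    linarith
  · simp only [Finset.mem_filter, Finset.mem_univ, true_and, not_not] at hp
    exact hp w w' ((Finset.le_sup hw).trans (Nat.le_succ _))
      ((Finset.le_sup hw').trans (Nat.le_succ _))

/-- Sofic approximations can be colored, with a bounded number of colors, so that near most points
`p` no pattern on `T g` is repeated on `g * T g`. -/
lemma IsSofic.exists_coloring {Γ : Type} [Group Γ] {n : ℕ} {γ : Fin n → Γ}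
    (h : IsSofic γ) {τ : Γ → FreeGroup (Fin n)} (hτ : ∀ x, FreeGroup.lift γ (τ x) = x⁻¹)
    {T : Γ → Finset Γ}
    (hT : ∀ g, g ≠ 1 → (T g).Nonempty ∧ ∀ t ∈ T g, ∀ s ∈ T g, t ≠ g * s) {m : ℕ}
    (hm : ∀ F : Finset Γ, ∑ g ∈ F, 2 * ((T g).card : ℝ) * (1 / 2) ^ ((T g).card - 1) + 2 ≤ m)
    (F : Finset Γ) (W : Finset (FreeGroup (Fin n))) {ε : ℝ} (hε : 0 < ε) :
    ∃ (V : Type) (_ : Fintype V) (_ : Nonempty V) (ρ : FreeGroup (Fin n) →* Equiv.Perm V)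
      (B : Finset V) (c : V → Fin m), (B.card : ℝ) ≤ ε * Fintype.card V ∧
      ∀ p ∉ B, (∀ w ∈ W, ∀ w' ∈ W,
          (ρ w p = ρ w' p ↔ FreeGroup.lift γ w = FreeGroup.lift γ w')) ∧
        ∀ g ∈ F, g ≠ 1 → ∃ t ∈ T g, c (ρ (τ t) p) ≠ c (ρ (τ (g * t)) p) := by
  classical
  let E : Γ → Finset Γ := fun g => T g ∪ (T g).image (g * ·)
  obtain ⟨V, hV, hV', ρ, B, hB, hρ⟩ :=
    h.exists_action_faithful_on_finset (W ∪ F.biUnion fun g => (E g).image τ) hε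
  have hinj : ∀ g ∈ F, ∀ p ∉ B, ∀ x ∈ E g, ∀ y ∈ E g, ρ (τ x) p = ρ (τ y) p → x = y := by
    intro g hg p hp x hx y hy hxy
    have hmem : ∀ z ∈ E g, τ z ∈ W ∪ F.biUnion fun g => (E g).image τ := fun z hz =>
      Finset.mem_union_right _ (Finset.mem_biUnion.2 ⟨g, hg, Finset.mem_image_of_mem _ hz⟩)
    have := (hρ p hp _ (hmem x hx) _ (hmem y hy)).1 hxy
    rwa [hτ, hτ, inv_inj] at this
  have hleft : ∀ g, ∀ t ∈ T g, t ∈ E g := fun g t ht => Finset.mem_union_left _ ht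
  have hright : ∀ g, ∀ t ∈ T g, g * t ∈ E g := fun g t ht =>
    Finset.mem_union_right _ (Finset.mem_image_of_mem _ ht)
  let I : Finset (Γ × V) := (F.filter (· ≠ 1)) ×ˢ Bᶜ
  have hI : ∀ i, i ∈ I ↔ (i.1 ∈ F ∧ i.1 ≠ 1) ∧ i.2 ∉ B := fun i => by simp [I]
  obtain ⟨c, hc⟩ : ∃ c : V → Fin m, ∀ i ∈ I,
      c ∉ {c : V → Fin m | ∀ t ∈ T i.1, c (ρ (τ t) i.2) = c (ρ (τ (i.1 * t)) i.2)} := by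
    refine exists_coloring_forall_notMem_bad I _
      (fun i => (E i.1).image fun x => ρ (τ x) i.2) (fun i => (T i.1).card) ?_ ?_ ?_ ?_
    · intro i _ c c' hcc hbad t ht
      rw [hcc _ (Finset.mem_image_of_mem _ (hleft _ t ht)),
        hcc _ (Finset.mem_image_of_mem _ (hright _ t ht))]
      exact hbad t ht
    · intro i hi
      obtain ⟨⟨hF, h1⟩, hp⟩ := (hI i).1 hi
      exact (((hT _ h1).1.mono fun t ht => hleft _ t ht)).image _
    · rintro ⟨g, p⟩ hi v hv
      obtain ⟨⟨hF, h1⟩, hp⟩ := (hI _).1 hi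
      replace hinj := hinj g hF p hp
      simp only [Finset.mem_image] at hv
      obtain ⟨x, hx, rfl⟩ := hv
      rcases Finset.mem_union.1 hx with hx | hx
      · refine ⟨(T g).image fun t => ρ (τ t) p, Finset.image_subset_image fun t ht => hleft g t ht,
          Finset.mem_image_of_mem _ hx, Finset.card_image_of_injOn fun t ht s hs hts =>
            hinj t (hleft g t ht) s (hleft g s hs) hts, fun c hc c' hc' hcc => ?_⟩
        have hout : ∀ t ∈ T g, c (ρ (τ (g * t)) p) = c' (ρ (τ (g * t)) p) := by
          refine fun t ht => hcc _ fun hmem => ?_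
          obtain ⟨s, hs, hst⟩ := Finset.mem_image.1 hmem
          exact (hT g h1).2 s hs t ht (hinj s (hleft g s hs) _ (hright g t ht) hst)
        funext w
        by_cases hw : w ∈ (T g).image fun t => ρ (τ t) p
        · obtain ⟨t, ht, rfl⟩ := Finset.mem_image.1 hw
          exact (hc t ht).trans ((hout t ht).trans (hc' t ht).symm)
        · exact hcc w hw
      · obtain ⟨t₀, ht₀, rfl⟩ := Finset.mem_image.1 hx
        refine ⟨(T g).image fun t => ρ (τ (g * t)) p, ?_,
          Finset.mem_image.2 ⟨t₀, ht₀, rfl⟩, Finset.card_image_of_injOn fun t ht s hs hts =>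
            mul_left_cancel (hinj _ (hright g t ht) _ (hright g s hs) hts),
          fun c hc c' hc' hcc => ?_⟩
        · intro w hw
          obtain ⟨t, ht, rfl⟩ := Finset.mem_image.1 hw
          exact Finset.mem_image.2 ⟨g * t, hright g t ht, rfl⟩
        have hout : ∀ t ∈ T g, c (ρ (τ t) p) = c' (ρ (τ t) p) := by
          refine fun t ht => hcc _ fun hmem => ?_
          obtain ⟨s, hs, hst⟩ := Finset.mem_image.1 hmem
          exact (hT g h1).2 t ht s hs (hinj _ (hright g s hs) t (hleft g t ht) hst).symm
        funext w
        by_cases hw : w ∈ (T g).image fun t => ρ (τ (g * t)) p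
        · obtain ⟨t, ht, rfl⟩ := Finset.mem_image.1 hw
          exact (hc t ht).symm.trans ((hout t ht).trans (hc' t ht))
        · exact hcc w hw
    · intro v J hJ hvJ
      rw [Fintype.card_fin]
      refine le_trans ?_ (hm F)
      gcongr
      rw [← Finset.sum_fiberwise_of_maps_to (g := Prod.fst) (t := F)
        fun i hi => ((hI i).1 (hJ hi)).1.1]
      refine Finset.sum_le_sum fun g hg => ?_
      have hcard : (J.filter fun i => i.1 = g).card ≤ 2 * (T g).card := by
        have hE : (E g).card ≤ 2 * (T g).card := by
          rw [two_mul]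
          exact (Finset.card_union_le _ _).trans (Nat.add_le_add_left Finset.card_image_le _)
        refine le_trans ?_ ((Finset.card_image_le (f := fun x => (ρ (τ x))⁻¹ v)).trans hE)
        refine Finset.card_le_card_of_injOn Prod.snd ?_ ?_
        · rintro ⟨g', p⟩ hi
          obtain ⟨hiJ, rfl⟩ := Finset.mem_filter.1 hi
          obtain ⟨x, hx, hxv⟩ := Finset.mem_image.1 (hvJ _ hiJ)
          exact Finset.mem_coe.2 (Finset.mem_image.2 ⟨x, hx, by rw [← hxv]; simp⟩)
        · rintro ⟨g₁, p₁⟩ h₁ ⟨g₂, p₂⟩ h₂ hp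
          have h₁' := (Finset.mem_filter.1 h₁).2
          have h₂' := (Finset.mem_filter.1 h₂).2
          simp_all
      calc ∑ i ∈ J with i.1 = g, (1 / 2 : ℝ) ^ ((T i.1).card - 1)
          = ∑ i ∈ J with i.1 = g, (1 / 2 : ℝ) ^ ((T g).card - 1) :=
            Finset.sum_congr rfl fun i hi => by rw [(Finset.mem_filter.1 hi).2]
        _ = ((J.filter fun i => i.1 = g).card : ℝ) * (1 / 2) ^ ((T g).card - 1) := by
            rw [Finset.sum_const, nsmul_eq_mul]
        _ ≤ _ := by
            gcongr
            exact_mod_cast hcard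
  refine ⟨V, hV, hV', ρ, B, c, hB, fun p hp => ⟨fun w hw w' hw' => ?_, fun g hg hg1 => ?_⟩⟩
  · exact hρ p hp w (Finset.mem_union_left _ hw) w' (Finset.mem_union_left _ hw')
  · simpa using hc (g, p) ((hI _).2 ⟨⟨hg, hg1⟩, hp⟩)

open ProbabilityTheory Filter
open scoped NNReal ENNReal Topology

lemma measurable_shiftMap {Γ K : Type} [Group Γ] [MeasurableSpace K] (g : Γ) :
    Measurable (shiftMap (K := K) g) :=
  measurable_pi_lambda _ fun x => measurable_pi_apply (g⁻¹ * x)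

lemma continuous_shiftMap {Γ K : Type} [Group Γ] [TopologicalSpace K] (g : Γ) :
    Continuous (shiftMap (K := K) g) :=
  continuous_pi fun x => continuous_apply (g⁻¹ * x)

lemma uniformOn_univ_preimage_equiv {V : Type*} [Fintype V] [MeasurableSpace V]
    [MeasurableSingletonClass V] (e : Equiv.Perm V) (s : Set V) :
    uniformOn Set.univ (e ⁻¹' s) = uniformOn Set.univ s := by
  rw [uniformOn_univ, uniformOn_univ, ← Equiv.image_symm_eq_preimage,
    Measure.count_injective_image e.symm.injective]

/-- Functions which repeat on `g * T` the pattern they show on `T`. -/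
def repeatingSet {Γ : Type} [Group Γ] (K : Type) (T : Finset Γ) (g : Γ) : Set (Γ → K) :=
  {f | ∀ t ∈ T, f t = f (g * t)}

lemma isClopen_repeatingSet {Γ : Type} [Group Γ] (K : Type) [TopologicalSpace K]
    [DiscreteTopology K] (T : Finset Γ) (g : Γ) : IsClopen (repeatingSet K T g) := by
  have : repeatingSet K T g = ⋂ t ∈ T, {f : Γ → K | f t = f (g * t)} := by
    ext f; simp [repeatingSet]
  rw [this]
  refine T.finite_toSet.isClopen_biInter fun t _ => ?_
  have hcont : Continuous fun f : Γ → K => (f t, f (g * t)) := by fun_prop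
  exact (isClopen_discrete {q : K × K | q.1 = q.2}).preimage hcont

/-- A sofic approximation produces measures on the full shift which are almost invariant and
almost supported on functions without repeated patterns. -/
lemma IsSofic.exists_approximate_measure {Γ : Type} [Group Γ] [Countable Γ] {n : ℕ}
    {γ : Fin n → Γ}
    (h : IsSofic γ) {τ : Γ → FreeGroup (Fin n)} (hτ : ∀ x, FreeGroup.lift γ (τ x) = x⁻¹)
    {T : Γ → Finset Γ}
    (hT : ∀ g, g ≠ 1 → (T g).Nonempty ∧ ∀ t ∈ T g, ∀ s ∈ T g, t ≠ g * s) {m : ℕ}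
    (hm : ∀ F : Finset Γ, ∑ g ∈ F, 2 * ((T g).card : ℝ) * (1 / 2) ^ ((T g).card - 1) + 2 ≤ m)
    (F : Finset Γ) {ε : ℝ≥0} (hε : 0 < ε) :
    ∃ ν : ProbabilityMeasure (Γ → Fin m),
      (∀ g ∈ F, g ≠ 1 → ν (repeatingSet (Fin m) (T g) g) ≤ ε) ∧
      ∀ g ∈ F, ∀ S ⊆ F, ∀ X : Set (S → Fin m),
        ν (shiftMap g ⁻¹' cylinder S X) ≤ ν (cylinder S X) + ε := by
  classical
  obtain ⟨V, hV, hV', ρ, B, c, hB, hc⟩ := h.exists_coloring hτ hT hm F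
    ((F ×ˢ F).image (fun q => τ (q.1⁻¹ * q.2)) ∪ (F ×ˢ F).image fun q => τ q.2 * τ q.1⁻¹)
    (NNReal.coe_pos.2 hε)
  let _ : MeasurableSpace V := ⊤
  let P : Measure V := uniformOn Set.univ
  have hP : IsProbabilityMeasure P :=
    isProbabilityMeasure_uniformOn Set.finite_univ Set.univ_nonempty
  have hPB : P B ≤ ε := by
    have hcard : (Fintype.card V : ℝ≥0∞) ≠ 0 := by simp
    simp only [P]
    rw [uniformOn_univ, Measure.count_apply_finset,
      ENNReal.div_le_iff hcard (ENNReal.natCast_ne_top _)]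
    exact_mod_cast hB
  let Φ : V → Γ → Fin m := fun p x => c (ρ (τ x) p)
  have hΦ : Measurable Φ := measurable_from_top
  let ν : ProbabilityMeasure (Γ → Fin m) :=
    ⟨P.map Φ, Measure.isProbabilityMeasure_map hΦ.aemeasurable⟩
  have hν : ∀ A, MeasurableSet A → (ν A : ℝ≥0∞) = P (Φ ⁻¹' A) := fun A hA => by
    rw [ProbabilityMeasure.ennreal_coeFn_eq_coeFn_toMeasure]
    exact Measure.map_apply hΦ hA
  refine ⟨ν, fun g hg hg1 => ?_, fun g hg S hS X => ?_⟩
  · rw [← ENNReal.coe_le_coe, hν _ (isClopen_repeatingSet _ _ _).isClosed.measurableSet]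
    refine (measure_mono fun p hp => ?_).trans hPB
    by_contra hpB
    obtain ⟨t, ht, hne⟩ := (hc p hpB).2 g hg hg1
    exact hne (hp t ht)
  · have hX : MeasurableSet (cylinder S X) :=
      MeasurableSet.cylinder (α := fun _ => Fin m) S X.toFinite.measurableSet
    rw [← ENNReal.coe_le_coe, ENNReal.coe_add, hν _ (measurable_shiftMap g hX), hν _ hX]
    have hsub : Φ ⁻¹' (shiftMap g ⁻¹' cylinder S X) ⊆
        ρ (τ g⁻¹) ⁻¹' (Φ ⁻¹' cylinder S X) ∪ B := by
      intro p hp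
      by_cases hpB : p ∈ B
      · exact Or.inr hpB
      refine Or.inl ?_
      have heq : S.restrict (Φ (ρ (τ g⁻¹) p)) = S.restrict (shiftMap g (Φ p)) := by
        funext ⟨x, hx⟩
        have hgx : (g, x) ∈ F ×ˢ F := Finset.mk_mem_product hg (hS hx)
        have := ((hc p hpB).1 _ (Finset.mem_union_right _ (Finset.mem_image_of_mem _ hgx)) _
          (Finset.mem_union_left _ (Finset.mem_image_of_mem _ hgx))).2 (by simp [hτ])
        simpa [Φ, shiftMap] using congrArg c this
      rw [Set.mem_preimage, Set.mem_preimage, mem_cylinder] at hp ⊢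
      rwa [heq]
    calc _ ≤ _ := measure_mono hsub
      _ ≤ P (ρ (τ g⁻¹) ⁻¹' (Φ ⁻¹' cylinder S X)) + P B := measure_union_le _ _
      _ ≤ _ := by
        rw [uniformOn_univ_preimage_equiv]
        gcongr

/-- every finitely generated sofic group admits a free Bernoulli subshift
carrying an invariant Borel probability measure. Here the alphabet is `Fin m`
(with `2 ≤ m`), carrying the discrete topology, and `Γ → Fin m` carries the product
topology and the product σ-algebra. -/
theorem sofic_group_has_free_subshift_with_invariant_measure
    {Γ : Type} [Group Γ] {n : ℕ} (γ : Fin n → Γ)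
    (hgen : Subgroup.closure (Set.range γ) = ⊤)
    (hsym : ∀ i : Fin n, (γ i)⁻¹ ∈ Set.range γ)
    (hsofic : IsSofic γ) :
    ∃ m : ℕ, 2 ≤ m ∧
      ∃ Y : Set (Γ → Fin m),
        Y.Nonempty ∧ IsClosed Y ∧
        (∀ g : Γ, ∀ f ∈ Y, shiftMap g f ∈ Y) ∧
        (∀ f ∈ Y, ∀ g : Γ, g ≠ 1 → shiftMap g f ≠ f) ∧
        ∃ μ : Measure (Γ → Fin m),
          IsProbabilityMeasure μ ∧ μ Y = 1 ∧
          ∀ g : Γ, MeasurePreserving (shiftMap g) μ μ := by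
  classical
  have hsurj : Function.Surjective (FreeGroup.lift γ) := by
    rw [← MonoidHom.range_eq_top, FreeGroup.range_lift_eq_closure, hgen]
  have : Countable Γ := hsurj.countable
  choose τ hτ using fun x : Γ => hsurj x⁻¹
  obtain ⟨T, hT, hTsum⟩ := exists_family_finset_forall_ne_mul_summable Γ
  obtain ⟨M, hM⟩ := exists_nat_ge (∑' g, 2 * ((T g).card : ℝ) * (1 / 2) ^ ((T g).card - 1))
  have hm : ∀ F : Finset Γ,
      ∑ g ∈ F, 2 * ((T g).card : ℝ) * (1 / 2) ^ ((T g).card - 1) + 2 ≤ (M + 2 : ℕ) := by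
    intro F
    push_cast
    gcongr
    exact (hTsum.sum_le_tsum F fun g _ => by positivity).trans hM
  generalize M + 2 = m at hm
  have hm2 : 2 ≤ m := by simpa using hm ∅
  -- pass to a weak limit of the approximate measures
  have happrox := fun i : Finset Γ × ℕ =>
    hsofic.exists_approximate_measure hτ hT hm i.1 (ε := 1 / (i.2 + 1)) (by positivity)
  choose ν hνrep hνinv using happrox
  let L : Ultrafilter (Finset Γ × ℕ) := Ultrafilter.of atTop
  have hL : (L : Filter (Finset Γ × ℕ)) ≤ atTop := Ultrafilter.of_le _
  obtain ⟨μ, -, hμ⟩ := isCompact_univ.ultrafilter_le_nhds (L.map ν) (by simp)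
  have hμlim : Tendsto ν L (𝓝 μ) := hμ
  have hε : Tendsto (fun i : Finset Γ × ℕ => (1 / (i.2 + 1) : ℝ≥0)) L (𝓝 0) := by
    refine Tendsto.mono_left ?_ hL
    rw [← prod_atTop_atTop_eq]
    exact tendsto_one_div_add_atTop_nhds_zero_nat.comp tendsto_snd
  have hmem : ∀ F : Finset Γ, ∀ᶠ i in (L : Filter (Finset Γ × ℕ)), F ⊆ i.1 := fun F =>
    hL ((eventually_ge_atTop (F, 0)).mono fun i hi => hi.1)
  have hrep : ∀ g, g ≠ 1 → μ (repeatingSet (Fin m) (T g) g) = 0 := by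
    intro g hg
    refine le_antisymm (le_of_tendsto_of_tendsto
      (ProbabilityMeasure.tendsto_measure_of_isClopen_of_tendsto hμlim
        (isClopen_repeatingSet (Fin m) (T g) g)) hε ?_) zero_le
    filter_upwards [hmem {g}] with i hi
    exact hνrep i g (by simpa using hi) hg
  have hcyl : ∀ (S : Finset Γ) (X : Set (S → Fin m)),
      IsClopen (cylinder (α := fun _ => Fin m) S X) := fun S X =>
    (isClopen_discrete X).preimage
      (Finset.continuous_restrict (A := fun _ : Γ => Fin m) S)
  have hle : ∀ g (S : Finset Γ) (X : Set (S → Fin m)),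
      μ (shiftMap g ⁻¹' cylinder S X) ≤ μ (cylinder S X) := by
    intro g S X
    rw [← add_zero (μ (cylinder S X))]
    refine le_of_tendsto_of_tendsto
      (ProbabilityMeasure.tendsto_measure_of_isClopen_of_tendsto hμlim
        ((hcyl S X).preimage (continuous_shiftMap g)))
      ((ProbabilityMeasure.tendsto_measure_of_isClopen_of_tendsto hμlim (hcyl S X)).add hε) ?_
    filter_upwards [hmem (insert g S)] with i hi
    exact hνinv i g (hi (Finset.mem_insert_self g S)) S
      ((Finset.subset_insert g S).trans hi) X
  have hinv : ∀ g : Γ, MeasurePreserving (shiftMap (K := Fin m) g) μ μ := by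
    intro g
    refine ⟨measurable_shiftMap g, ?_⟩
    have := Measure.isProbabilityMeasure_map (μ := (μ : Measure (Γ → Fin m)))
      (measurable_shiftMap (K := Fin m) g).aemeasurable
    refine ext_of_generate_finite _ generateFrom_measurableCylinders.symm
      isPiSystem_measurableCylinders (fun A hA => ?_) (by simp)
    obtain ⟨S, X, hX, rfl⟩ := (mem_measurableCylinders A).1 hA
    rw [Measure.map_apply (measurable_shiftMap g) (hX.cylinder S)]
    have h1 : ∀ X : Set (S → Fin m),
        (μ : Measure (Γ → Fin m)) (shiftMap g ⁻¹' cylinder S X) ≤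
          (μ : Measure (Γ → Fin m)) (cylinder S X) := fun X => by
      simpa only [← ProbabilityMeasure.ennreal_coeFn_eq_coeFn_toMeasure, ENNReal.coe_le_coe]
        using hle g S X
    refine le_antisymm (h1 X) ?_
    have h2 := h1 Xᶜ
    rw [← compl_cylinder, Set.preimage_compl, prob_compl_eq_one_sub (hX.cylinder S),
      prob_compl_eq_one_sub (measurable_shiftMap g (hX.cylinder S))] at h2
    exact (ENNReal.sub_le_sub_iff_left prob_le_one ENNReal.one_ne_top).1 h2
  let Y : Set (Γ → Fin m) :=
    ⋂ (h : Γ) (g : Γ) (_ : g ≠ 1), shiftMap h ⁻¹' (repeatingSet (Fin m) (T g) g)ᶜ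
  have hY : ∀ f, f ∈ Y ↔ ∀ h g, g ≠ 1 → shiftMap h f ∉ repeatingSet (Fin m) (T g) g := fun f => by
    simp [Y]
  have hshift : ∀ (g h : Γ) (f : Γ → Fin m), shiftMap g (shiftMap h f) = shiftMap (g * h) f :=
    fun g h f => by funext x; simp [shiftMap, mul_assoc]
  have hμY : (μ : Measure (Γ → Fin m)) Yᶜ = 0 := by
    simp only [Y, Set.compl_iInter, Set.preimage_compl, compl_compl]
    refine measure_iUnion_null fun h => measure_iUnion_null fun g =>
      measure_iUnion_null fun hg => ?_
    rw [(hinv h).measure_preimage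
      (isClopen_repeatingSet (Fin m) (T g) g).isClosed.measurableSet.nullMeasurableSet,
      ← ProbabilityMeasure.ennreal_coeFn_eq_coeFn_toMeasure, hrep g hg, ENNReal.coe_zero]
  have hYclosed : IsClosed Y := isClosed_iInter fun h => isClosed_iInter fun g =>
    isClosed_iInter fun _ =>
      (isClopen_repeatingSet (Fin m) (T g) g).compl.isClosed.preimage (continuous_shiftMap h)
  have hμY1 : (μ : Measure (Γ → Fin m)) Y = 1 :=
    (prob_compl_eq_zero_iff hYclosed.measurableSet).1 hμY
  refine ⟨m, hm2, Y, ?_, hYclosed, fun g f hf => ?_, fun f hf g hg hgf => ?_, μ, inferInstance,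
    hμY1, hinv⟩
  · rw [Set.nonempty_iff_ne_empty]
    intro hempty
    simp [hempty] at hμY1
  · refine (hY _).2 fun h g' hg' => ?_
    rw [hshift]
    exact (hY f).1 hf (h * g) g' hg'
  · refine (hY f).1 hf 1 g⁻¹ (inv_ne_one.2 hg) fun t _ => ?_
    have := congrFun hgf t
    simpa [shiftMap] using this.symm
end

section
/- Let Γ be a finitely generated group and Z a uniformly recurrent subgroup of Γ. Then Z is coamenable if and only if every Z-proper Γ-system (X,Γ,α), with X nonempty compact metrizable, admits a Γ-invariant Borel probability measure on X. -/
open scoped Classical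

/-- Conjugation action of a group on its subgroups: `g • H = gHg⁻¹`. -/
def conjSub {Γ : Type*} [Group Γ] (g : Γ) (H : Subgroup Γ) : Subgroup Γ :=
  Subgroup.map (MulAut.conj g).toMonoidHom H

/-- The Chabauty-type topology on `Sub(Γ)`: the topology induced from the product
topology on `{0,1}^Γ` via `H ↦ (γ ↦ decide (γ ∈ H))`. -/
noncomputable instance chabauty {Γ : Type*} [Group Γ] : TopologicalSpace (Subgroup Γ) :=
  TopologicalSpace.induced
    (fun H (g : Γ) => @decide (g ∈ H) (Classical.dec _)) inferInstance

/-- A uniformly recurrent subgroup: a nonempty, closed, conjugation-invariant subset of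
`Sub(Γ)` on which every conjugation orbit is dense. -/
structure IsURS {Γ : Type*} [Group Γ] (Z : Set (Subgroup Γ)) : Prop where
  nonempty : Z.Nonempty
  closed : IsClosed Z
  invariant : ∀ g : Γ, ∀ H ∈ Z, conjSub g H ∈ Z
  minimal : ∀ H ∈ Z, ∀ K ∈ Z, K ∈ closure {L : Subgroup Γ | ∃ g : Γ, conjSub g H = L}

/-- A subgroup `H ≤ Γ` is coamenable if the action of `Γ` on `Γ/H` is amenable: there is
a sequence of nonempty finite subsets `Fₖ ⊆ Γ/H` with `|g•Fₖ ∪ Fₖ|/|Fₖ| → 1` for all `g`. -/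
noncomputable def Coamenable {Γ : Type*} [Group Γ] (H : Subgroup Γ) : Prop :=
  ∃ F : ℕ → Finset (Γ ⧸ H), (∀ k, (F k).Nonempty) ∧
    ∀ g : Γ, Filter.Tendsto
      (fun k => ((((F k).image (fun x => g • x)) ∪ F k).card : ℝ) / ((F k).card : ℝ))
      Filter.atTop (nhds 1)

/-- A `Γ`-system: a nonempty compact metrizable space with a continuous `Γ`-action
(by homeomorphisms). -/
structure GammaSystem (Γ : Type) [Group Γ] where
  X : Type
  [topX : TopologicalSpace X]
  [compactX : CompactSpace X]
  [metrizableX : TopologicalSpace.MetrizableSpace X]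
  [nonemptyX : Nonempty X]
  [act : MulAction Γ X]
  [cts : ContinuousConstSMul Γ X]

attribute [instance] GammaSystem.topX GammaSystem.compactX GammaSystem.metrizableX
  GammaSystem.nonemptyX GammaSystem.act GammaSystem.cts

/-- The set of elements fixing pointwise some open neighborhood of `x`. -/
def stab0 (Γ : Type*) [Group Γ] {X : Type*} [TopologicalSpace X] [MulAction Γ X]
    (x : X) : Set Γ :=
  {γ : Γ | ∃ U : Set X, IsOpen U ∧ x ∈ U ∧ ∀ y ∈ U, γ • y = y}

/-- A `Γ`-system is `Z`-proper if every stabilizer coincides with the corresponding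
neighborhood stabilizer and belongs to `Z`. -/
def IsZProper (Γ : Type*) [Group Γ] {X : Type*} [TopologicalSpace X] [MulAction Γ X]
    (Z : Set (Subgroup Γ)) : Prop :=
  ∀ x : X, ((MulAction.stabilizer Γ x : Subgroup Γ) : Set Γ) = stab0 Γ x ∧
    MulAction.stabilizer Γ x ∈ Z

/-- A `Γ`-system admits an invariant Borel probability measure. -/
def HasInvariantProbabilityMeasure {Γ : Type} [Group Γ] (S : GammaSystem Γ) : Prop :=
  ∃ μ : @MeasureTheory.Measure S.X (borel S.X),
    @MeasureTheory.IsProbabilityMeasure S.X (borel S.X) μ ∧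
    ∀ g : Γ, @MeasureTheory.MeasurePreserving S.X S.X (borel S.X) (borel S.X)
      (fun x => g • x) μ μ

/-! ### From coamenability to invariant measures -/

section Folner

open MeasureTheory Filter Topology
open scoped BoundedContinuousFunction

lemma abs_sum_smul_sub_sum_le {Γ A : Type*} [DecidableEq A] [Group Γ] [MulAction Γ A]
    (F : Finset A) (g : Γ)
    (f : A → ℝ) (M : ℝ) (hM : ∀ a, |f a| ≤ M) :
    |∑ a ∈ F, f (g • a) - ∑ a ∈ F, f a|
      ≤ 2 * M * (((F.image (fun x => g • x)) ∪ F).card - F.card) := by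
  have hinj : Function.Injective (fun x : A => g • x) := MulAction.injective g
  have himg : ∑ a ∈ F, f (g • a) = ∑ a ∈ F.image (fun x => g • x), f a :=
    (Finset.sum_image (hinj.injOn)).symm
  have hcard : (F.image (fun x => g • x)).card = F.card := Finset.card_image_of_injective _ hinj
  set G := F.image (fun x => g • x) with hG
  have key : ∀ B ⊆ G ∪ F, B.card = F.card →
      |∑ a ∈ G ∪ F, f a - ∑ a ∈ B, f a| ≤ M * ((G ∪ F).card - F.card) := by
    intro B hB hBc
    rw [← Finset.sum_sdiff hB, add_sub_cancel_right]
    calc |∑ a ∈ (G ∪ F) \ B, f a| ≤ ∑ a ∈ (G ∪ F) \ B, |f a| := Finset.abs_sum_le_sum_abs _ _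
      _ ≤ ((G ∪ F) \ B).card • M := Finset.sum_le_card_nsmul _ _ _ fun a _ => hM a
      _ = M * ((G ∪ F).card - F.card) := by
        rw [Finset.card_sdiff_of_subset hB, nsmul_eq_mul,
          Nat.cast_sub (Finset.card_le_card hB), hBc, mul_comm]
  have h1 := abs_le.1 (key G Finset.subset_union_left hcard)
  have h2 := abs_le.1 (key F Finset.subset_union_right rfl)
  rw [himg, abs_le]
  constructor <;> linarith [h1.1, h1.2, h2.1, h2.2]

/-- The average of the Dirac masses at the images of the points of `F`. -/
noncomputable def averageDirac {A X : Type*} [MeasurableSpace X] (F : Finset A) (π : A → X) :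
    Measure X :=
  ((F.card : ENNReal)⁻¹) • ∑ a ∈ F, Measure.dirac (π a)

lemma isProbabilityMeasure_averageDirac {A X : Type*} [MeasurableSpace X] (F : Finset A)
    (hF : F.Nonempty) (π : A → X) : IsProbabilityMeasure (averageDirac F π) := by
  constructor
  simp only [averageDirac, Measure.smul_apply, Measure.finsetSum_apply, measure_univ,
    Finset.sum_const, smul_eq_mul, nsmul_eq_mul, mul_one]
  exact ENNReal.inv_mul_cancel (by simpa using hF.ne_empty) (by simp)

lemma integral_averageDirac {A X : Type*} [TopologicalSpace X] [MeasurableSpace X]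
    [OpensMeasurableSpace X] (F : Finset A) (π : A → X) (f : X →ᵇ ℝ) :
    ∫ x, f x ∂(averageDirac F π) = (F.card : ℝ)⁻¹ * ∑ a ∈ F, f (π a) := by
  have hf : StronglyMeasurable f := f.continuous.measurable.stronglyMeasurable
  rw [averageDirac, integral_smul_measure, integral_finsetSum_measure]
  · simp [integral_dirac' _ _ hf]
  · intro a _
    exact BoundedContinuousFunction.integrable _ f

lemma exists_invariant_measure_of_folner {Γ A X : Type*} [DecidableEq A] [Group Γ]
    [MulAction Γ A]
    [TopologicalSpace X] [CompactSpace X] [TopologicalSpace.MetrizableSpace X]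
    [MeasurableSpace X] [BorelSpace X] [MulAction Γ X] [ContinuousConstSMul Γ X]
    (F : ℕ → Finset A) (hF : ∀ k, (F k).Nonempty)
    (hfol : ∀ g : Γ, Tendsto
      (fun k => ((((F k).image (fun x => g • x)) ∪ F k).card : ℝ) / ((F k).card : ℝ))
      atTop (𝓝 1))
    (π : A → X) (hπ : ∀ (g : Γ) a, π (g • a) = g • π a) :
    ∃ μ : Measure X, IsProbabilityMeasure μ ∧
      ∀ g : Γ, MeasurePreserving (fun x => g • x) μ μ := by
  let μs : ℕ → ProbabilityMeasure X := fun k =>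
    ⟨averageDirac (F k) π, isProbabilityMeasure_averageDirac (F k) (hF k) π⟩
  let U : Ultrafilter ℕ := Ultrafilter.of atTop
  have hU : (U : Filter ℕ) ≤ atTop := Ultrafilter.of_le _
  obtain ⟨μ, -, hμ⟩ := isCompact_univ.ultrafilter_le_nhds (U.map μs) (by simp)
  have hμ' : Tendsto μs U (𝓝 μ) := hμ
  rw [ProbabilityMeasure.tendsto_iff_forall_integral_tendsto] at hμ'
  refine ⟨μ, inferInstance, fun g => ?_⟩
  have hg : Continuous (fun x : X => g • x) := continuous_const_smul g
  refine ⟨hg.measurable, ?_⟩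
  have : IsProbabilityMeasure (Measure.map (fun x : X => g • x) (μ : Measure X)) :=
    Measure.isProbabilityMeasure_map hg.measurable.aemeasurable
  refine ext_of_forall_integral_eq_of_IsFiniteMeasure fun f => ?_
  rw [integral_map hg.measurable.aemeasurable f.continuous.measurable.aestronglyMeasurable]
  have h1 := hμ' (f.compContinuous ⟨_, hg⟩)
  have h2 := hμ' f
  have h3 := h1.sub h2
  refine sub_eq_zero.1 (tendsto_nhds_unique h3 ?_)
  have h4 : Tendsto (fun k => 2 * ‖f‖ *
      (((((F k).image (fun x => g • x)) ∪ F k).card : ℝ) / ((F k).card : ℝ) - 1)) U (𝓝 0) := by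
    have := (((hfol g).mono_left hU).sub_const 1).const_mul (2 * ‖f‖)
    simpa using this
  refine squeeze_zero_norm (fun k => ?_) h4
  have hpos : (0 : ℝ) < (F k).card := by exact_mod_cast (hF k).card_pos
  simp only [μs, ProbabilityMeasure.coe_mk, integral_averageDirac]
  rw [← mul_sub, Real.norm_eq_abs, abs_mul, abs_of_pos (inv_pos.2 hpos)]
  have := abs_sum_smul_sub_sum_le (F k) g (fun a => f (π a)) ‖f‖ fun a => f.norm_coe_le_norm _
  simp only [hπ] at this
  calc _ ≤ ((F k).card : ℝ)⁻¹ * _ := mul_le_mul_of_nonneg_left this (inv_nonneg.2 hpos.le)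
    _ = _ := by field_simp

lemma hasInvariantProbabilityMeasure_of_coamenable {Γ : Type} [Group Γ] (S : GammaSystem Γ)
    (x : S.X) (hx : Coamenable (MulAction.stabilizer Γ x)) :
    HasInvariantProbabilityMeasure S := by
  obtain ⟨F, hF, hfol⟩ := hx
  let _ : MeasurableSpace S.X := borel S.X
  have : BorelSpace S.X := ⟨rfl⟩
  exact exists_invariant_measure_of_folner F hF hfol (MulAction.ofQuotientStabilizer Γ x)
    (MulAction.ofQuotientStabilizer_smul Γ x)

end Folner

/-! ### Combinatorics on a coset space -/

section Combinatorics

open Filter Topology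
open scoped Pointwise

lemma exists_proper_coloring {A : Type*} [Countable A] (σ : Equiv.Perm A) :
    ∃ c : A → Fin 3, ∀ x, σ x ≠ x → c (σ x) ≠ c x := by
  obtain ⟨e, he⟩ := exists_injective_nat A
  have hex : ∀ a b : Fin 3, ∃ d : Fin 3, d ≠ a ∧ d ≠ b := by decide
  choose d hd1 hd2 using hex
  have wf : WellFounded (fun x y : A => e x < e y) := (measure e).wf
  let step : ∀ x : A, (∀ y, e y < e x → Fin 3) → Fin 3 := fun x rec =>
    d (if h : e (σ x) < e x then rec _ h else 0) (if h : e (σ⁻¹ x) < e x then rec _ h else 0)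
  have hstep : ∀ x, wf.fix step x = step x (fun y _ => wf.fix step y) := wf.fix_eq step
  refine ⟨wf.fix step, fun x hx => ?_⟩
  rcases lt_trichotomy (e (σ x)) (e x) with h | h | h
  · have := hd1 (if h : e (σ x) < e x then wf.fix step (σ x) else 0)
      (if h : e (σ⁻¹ x) < e x then wf.fix step (σ⁻¹ x) else 0)
    rw [hstep x]
    simp only [step]
    rw [dif_pos h] at this ⊢
    exact this.symm
  · exact absurd (he h) hx
  · have := hd2 (if h : e (σ (σ x)) < e (σ x) then wf.fix step (σ (σ x)) else 0)
      (if h : e (σ⁻¹ (σ x)) < e (σ x) then wf.fix step (σ⁻¹ (σ x)) else 0)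
    rw [hstep (σ x)]
    have hinv : σ⁻¹ (σ x) = x := σ.symm_apply_apply x
    simp only [step]
    rwa [hinv, dif_pos h] at this ⊢

/-- The colour `0` marks the fixed points of `σ`. -/
lemma exists_coloring_fixedPoints {A : Type*} [Countable A] (σ : Equiv.Perm A) :
    ∃ c : A → Fin 4, ∀ x, (c x = 0 ↔ σ x = x) ∧ (c x ≠ 0 → c (σ x) ≠ c x) := by
  obtain ⟨c, hc⟩ := exists_proper_coloring σ
  refine ⟨fun x => if σ x = x then 0 else (c x).succ, fun x => ?_⟩
  by_cases hx : σ x = x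
  · simp [hx]
  · have : σ (σ x) ≠ σ x := fun h => hx (σ.injective h)
    simp [hx, this, Fin.succ_ne_zero, hc x hx]

lemma coamenable_of_almost_invariant {Γ : Type*} [Group Γ] [Countable Γ] (H : Subgroup Γ)
    (h : ∀ (S : Finset Γ) (ε : ℝ), 0 < ε → ∃ F : Finset (Γ ⧸ H), F.Nonempty ∧ ∀ g ∈ S,
      ((((F.image (fun x => g • x)) ∪ F).card : ℕ) : ℝ) ≤ (1 + ε) * F.card) :
    Coamenable H := by
  obtain ⟨e, he⟩ := exists_injective_nat Γ
  have hfin : ∀ k : ℕ, {g : Γ | e g ≤ k}.Finite := fun k =>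
    (Set.finite_Iic k).preimage he.injOn
  choose F hF hF2 using fun k : ℕ => h (hfin k).toFinset (1 / ((k : ℝ) + 1)) (by positivity)
  refine ⟨F, hF, fun g => ?_⟩
  have hlim : Tendsto (fun k : ℕ => 1 + 1 / ((k : ℝ) + 1)) atTop (𝓝 1) := by
    simpa using tendsto_one_div_add_atTop_nhds_zero_nat.const_add (1 : ℝ)
  have hpos : ∀ k, (0 : ℝ) < (F k).card := fun k => by exact_mod_cast (hF k).card_pos
  refine tendsto_of_tendsto_of_tendsto_of_le_of_le' tendsto_const_nhds hlim ?_ ?_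
  · refine Eventually.of_forall fun k => ?_
    rw [le_div_iff₀ (hpos k), one_mul]
    exact_mod_cast Finset.card_le_card Finset.subset_union_right
  · filter_upwards [eventually_ge_atTop (e g)] with k hk
    rw [div_le_iff₀ (hpos k)]
    exact hF2 k g (by simpa using hk)

lemma exists_doubling_of_not_coamenable {Γ : Type*} [Group Γ] [Countable Γ] (H : Subgroup Γ)
    (h : ¬ Coamenable H) :
    ∃ S : Finset Γ, ∀ F : Finset (Γ ⧸ H), 2 * F.card ≤ (S • F).card := by
  have h' := mt (coamenable_of_almost_invariant H) h
  push Not at h'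
  obtain ⟨S, ε, hε, hS⟩ := h'
  have hexp : ∀ F : Finset (Γ ⧸ H), (1 + ε) * F.card ≤ (((insert 1 S) • F).card : ℝ) := by
    intro F
    rcases F.eq_empty_or_nonempty with rfl | hF
    · simp
    obtain ⟨g, hg, hlt⟩ := hS F hF
    refine hlt.le.trans ?_
    have : (F.image (fun x => g • x)) ∪ F ⊆ (insert 1 S) • F := by
      intro y hy
      rcases Finset.mem_union.1 hy with hy | hy
      · obtain ⟨x, hx, rfl⟩ := Finset.mem_image.1 hy
        exact Finset.smul_mem_smul (Finset.mem_insert_of_mem hg) hx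
      · simpa using Finset.smul_mem_smul (Finset.mem_insert_self (1 : Γ) S) hy
    exact_mod_cast Finset.card_le_card this
  have hpow : ∀ (n : ℕ) (F : Finset (Γ ⧸ H)),
      (1 + ε) ^ n * F.card ≤ (((insert 1 S) ^ n • F).card : ℝ) := by
    intro n
    induction n with
    | zero => intro F; simp
    | succ n ih =>
      intro F
      rw [pow_succ', pow_succ', mul_smul, mul_assoc]
      exact (mul_le_mul_of_nonneg_left (ih F) (by positivity)).trans (hexp _)
  obtain ⟨n, hn⟩ := pow_unbounded_of_one_lt (2 : ℝ) (by linarith : (1 : ℝ) < 1 + ε)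
  refine ⟨(insert 1 S) ^ n, fun F => ?_⟩
  have : (2 : ℝ) * F.card ≤ (((insert 1 S) ^ n • F).card : ℝ) :=
    (mul_le_mul_of_nonneg_right hn.le (Nat.cast_nonneg _)).trans (hpow n F)
  exact_mod_cast this

lemma exists_injective_of_doubling {Γ A : Type*} [DecidableEq A] [Group Γ] [MulAction Γ A]
    (S : Finset Γ)     (hS : ∀ F : Finset A, 2 * F.card ≤ (S • F).card) :
    ∃ σ : A → Bool → Γ, (∀ x i, σ x i ∈ S) ∧
      Function.Injective (fun p : A × Bool => σ p.1 p.2 • p.1) := by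
  have hall := (Finset.all_card_le_biUnion_card_iff_exists_injective
    (fun p : A × Bool => S • ({p.1} : Finset A))).1 fun T => by
      have h1 : T ⊆ T.image Prod.fst ×ˢ (Finset.univ : Finset Bool) := fun p hp => by
        exact Finset.mem_product.2 ⟨Finset.mem_image_of_mem _ hp, Finset.mem_univ _⟩
      have h2 := Finset.card_le_card h1
      rw [Finset.card_product, Finset.card_univ, Fintype.card_bool] at h2
      have h3 : S • T.image Prod.fst ⊆ T.biUnion fun p => S • ({p.1} : Finset A) := by
        intro y hy
        obtain ⟨s, hs, x, hx, rfl⟩ := Finset.mem_smul.1 hy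
        obtain ⟨p, hp, rfl⟩ := Finset.mem_image.1 hx
        exact Finset.mem_biUnion.2
          ⟨p, hp, Finset.smul_mem_smul hs (Finset.mem_singleton_self _)⟩
      have h4 := Finset.card_le_card h3
      have h5 := hS (T.image Prod.fst)
      omega
  obtain ⟨φ, hφ, hmem⟩ := hall
  have : ∀ (x : A) (i : Bool), ∃ s ∈ S, s • x = φ (x, i) := fun x i => by
    simpa [Finset.mem_smul] using hmem (x, i)
  choose σ hσ hσ2 using this
  refine ⟨σ, hσ, ?_⟩
  simpa [hσ2] using hφ

/-- A bounded-displacement mass transport witnessing non-amenability: every point sends total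
mass `2` and receives total mass at most `1`. -/
lemma exists_transport_of_not_coamenable {Γ : Type*} [Group Γ] [Countable Γ] (H : Subgroup Γ)
    (h : ¬ Coamenable H) :
    ∃ (S : Finset Γ) (N : Γ → Γ ⧸ H → Fin 3),
      (∀ x, ∑ s ∈ S, (N s x : ℕ) = 2) ∧ ∀ x, ∑ s ∈ S, (N s (s⁻¹ • x) : ℕ) ≤ 1 := by
  obtain ⟨S, hS⟩ := exists_doubling_of_not_coamenable H h
  obtain ⟨σ, hσ, hinj⟩ := exists_injective_of_doubling S hS
  refine ⟨S, fun s x => ⟨(Finset.univ.filter fun i => σ x i = s).card,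
    Nat.lt_succ_of_le ((Finset.card_filter_le _ _).trans (by simp))⟩, fun x => ?_, fun x => ?_⟩
  · exact (Finset.card_eq_sum_card_fiberwise (s := (Finset.univ : Finset Bool)) (f := σ x)
      (t := S) fun i _ => hσ x i).symm
  · change ∑ s ∈ S, (Finset.univ.filter fun i => σ (s⁻¹ • x) i = s).card ≤ 1
    rw [← Finset.card_sigma, Finset.card_le_one]
    rintro ⟨s, i⟩ hs ⟨t, j⟩ ht
    simp only [Finset.mem_sigma, Finset.mem_filter, Finset.mem_univ, true_and] at hs ht
    have : ((s⁻¹ • x, i) : (Γ ⧸ H) × Bool) = (t⁻¹ • x, j) := hinj (by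
      simp only [hs.2, ht.2, smul_inv_smul])
    obtain ⟨h1, rfl⟩ := Prod.mk.inj this
    have hst : s = t := by rw [← hs.2, ← ht.2, h1]
    subst hst
    rfl

end Combinatorics

/-! ### Orbit closures in shift spaces -/

section Shift

/-- The set of translates `t ↦ y (t * h)` of a function on a group. -/
def translates {Γ C : Type*} [Group Γ] (y : Γ → C) : Set (Γ → C) :=
  Set.range fun (h : Γ) (t : Γ) => y (t * h)

lemma translate_mem_closure_translates {Γ C : Type*} [Group Γ] [TopologicalSpace C] (y : Γ → C)
    (g : Γ) {z : Γ → C} (hz : z ∈ closure (translates y)) :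
    (fun t => z (t * g)) ∈ closure (translates y) := by
  have hc : Continuous fun (z : Γ → C) (t : Γ) => z (t * g) := by fun_prop
  refine map_mem_closure hc hz ?_
  rintro _ ⟨h, rfl⟩
  exact ⟨g * h, by simp [mul_assoc]⟩

instance {Γ C : Type*} [Group Γ] [TopologicalSpace C] (y : Γ → C) :
    MulAction Γ (closure (translates y)) where
  smul g z := ⟨fun t => z.1 (t * g), translate_mem_closure_translates y g z.2⟩
  one_smul z := Subtype.ext (funext fun t => congrArg z.1 (mul_one t))
  mul_smul g h z := Subtype.ext (funext fun t => congrArg z.1 (mul_assoc t g h).symm)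

instance {Γ C : Type*} [Group Γ] [TopologicalSpace C] (y : Γ → C) :
    ContinuousConstSMul Γ (closure (translates y)) :=
  ⟨fun g => Continuous.subtype_mk
    (continuous_pi fun t => (continuous_apply (t * g)).comp continuous_subtype_val)
    fun z => translate_mem_closure_translates y g z.2⟩

lemma self_mem_closure_translates {Γ C : Type*} [Group Γ] [TopologicalSpace C] (y : Γ → C) :
    y ∈ closure (translates y) :=
  subset_closure ⟨1, by simp⟩

/-- The orbit closure of `y` under translation, as a `Γ`-system. -/
def shiftOrbitClosure {Γ : Type} [Group Γ] [Countable Γ] {C : Type} [TopologicalSpace C]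
    [CompactSpace C] [TopologicalSpace.MetrizableSpace C] (y : Γ → C) : GammaSystem Γ where
  X := closure (translates y)
  compactX := isCompact_iff_compactSpace.1 isClosed_closure.isCompact
  nonemptyX := ⟨⟨y, self_mem_closure_translates y⟩⟩

lemma closure_translates_induction {Γ C : Type*} [Group Γ] [TopologicalSpace C] (y : Γ → C)
    {p : closure (translates y) → Prop} (hp : IsClosed {z | p z})
    (h : ∀ g : Γ, p (g • ⟨y, self_mem_closure_translates y⟩)) (z : closure (translates y)) :
    p z := by
  have hz : z ∈ closure (Set.range fun g : Γ =>
      g • (⟨y, self_mem_closure_translates y⟩ : closure (translates y))) := by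
    rw [closure_subtype, ← Set.range_comp]
    exact z.2
  exact closure_minimal (Set.range_subset_iff.2 h) hp hz

variable {Γ : Type} [Group Γ] {H : Subgroup Γ}

/-- The function on `Γ` obtained by pulling back two families of labels of `Γ ⧸ H`. -/
def cosetLabel (c : Γ → Γ ⧸ H → Fin 4) (N : Γ → Γ ⧸ H → Fin 3) :
    Γ → Γ → Fin 4 × Fin 3 :=
  fun t s => (c s (t : Γ ⧸ H), N s (t : Γ ⧸ H))

variable (c : Γ → Γ ⧸ H → Fin 4) (N : Γ → Γ ⧸ H → Fin 3)

lemma continuous_label (t s : Γ) :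
    Continuous fun z : closure (translates (cosetLabel c N)) => z.1 t s :=
  (continuous_apply s).comp ((continuous_apply t).comp continuous_subtype_val)

lemma isClopen_label_eq_zero (g : Γ) :
    IsClopen {z : closure (translates (cosetLabel c N)) | (z.1 1 g).1 = 0} :=
  (isClopen_discrete {k : Fin 4 × Fin 3 | k.1 = 0}).preimage (continuous_label c N 1 g)

variable (hc : ∀ g x, (c g x = 0 ↔ g • x = x) ∧ (c g x ≠ 0 → c g (g • x) ≠ c g x))

include hc in
lemma mem_stabilizer_iff_label_eq_zero (g : Γ) (z : closure (translates (cosetLabel c N))) :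
    g ∈ MulAction.stabilizer Γ z ↔ (z.1 1 g).1 = 0 := by
  rw [MulAction.mem_stabilizer_iff]
  constructor
  · intro h
    by_contra h0
    refine closure_translates_induction (cosetLabel c N)
      (p := fun z => (z.1 1 g).1 ≠ 0 → (z.1 g g).1 ≠ (z.1 1 g).1) ?_ ?_ z h0 ?_
    · refine (isClosed_discrete
        {k : (Fin 4 × Fin 3) × (Fin 4 × Fin 3) | k.1.1 ≠ 0 → k.2.1 ≠ k.1.1}).preimage
        ((continuous_label c N 1 g).prodMk (continuous_label c N g g))
    · intro h h0
      have h1 : c g ((1 * h : Γ) : Γ ⧸ H) ≠ 0 := h0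
      have := (hc g _).2 h1
      change c g ((g * h : Γ) : Γ ⧸ H) ≠ c g ((1 * h : Γ) : Γ ⧸ H)
      rwa [one_mul] at this ⊢
    · have h2 : (g • z).1 1 = z.1 1 := by rw [h]
      have h3 : (g • z).1 1 = z.1 (1 * g) := rfl
      rw [one_mul] at h3
      rw [← h3, h2]
  · intro h0
    refine Subtype.ext (funext fun t => funext fun s => ?_)
    refine closure_translates_induction (cosetLabel c N)
      (p := fun z => (z.1 1 g).1 = 0 → z.1 (t * g) s = z.1 t s) ?_ ?_ z h0
    · exact (isClosed_discrete {k : (Fin 4 × Fin 3) × (Fin 4 × Fin 3) × (Fin 4 × Fin 3) |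
          k.1.1 = 0 → k.2.1 = k.2.2}).preimage ((continuous_label c N 1 g).prodMk
          ((continuous_label c N (t * g) s).prodMk (continuous_label c N t s)))
    · intro h h0
      have h1 : c g ((1 * h : Γ) : Γ ⧸ H) = 0 := h0
      rw [(hc g _).1, one_mul] at h1
      have h2 : ((t * g * h : Γ) : Γ ⧸ H) = ((t * h : Γ) : Γ ⧸ H) := by
        rw [mul_assoc]
        exact congrArg (t • ·) h1
      change (c s ((t * g * h : Γ) : Γ ⧸ H), N s ((t * g * h : Γ) : Γ ⧸ H)) =
        (c s ((t * h : Γ) : Γ ⧸ H), N s ((t * h : Γ) : Γ ⧸ H))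
      rw [h2]

include hc in
lemma stabilizer_cosetLabel :
    MulAction.stabilizer Γ
      (⟨cosetLabel c N, self_mem_closure_translates _⟩ : closure (translates (cosetLabel c N)))
      = H := by
  ext g
  rw [mem_stabilizer_iff_label_eq_zero c N hc]
  change c g ((1 : Γ) : Γ ⧸ H) = 0 ↔ _
  rw [(hc g _).1]
  change ((g * 1 : Γ) : Γ ⧸ H) = ((1 : Γ) : Γ ⧸ H) ↔ _
  rw [mul_one, eq_comm, QuotientGroup.eq, inv_one, one_mul]

include hc in
lemma isZProper_cosetLabel {Z : Set (Subgroup Γ)} (hZ : IsURS Z) (hH : H ∈ Z) :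
    IsZProper Γ (X := closure (translates (cosetLabel c N))) Z := by
  intro z
  refine ⟨Set.ext fun g => ⟨fun hg => ?_, ?_⟩, ?_⟩
  · refine ⟨_, (isClopen_label_eq_zero c N g).isOpen,
      (mem_stabilizer_iff_label_eq_zero c N hc g z).1 hg, fun w hw => ?_⟩
    exact (mem_stabilizer_iff_label_eq_zero c N hc g w).2 hw
  · rintro ⟨U, -, hz, hU⟩
    exact hU z hz
  · refine closure_translates_induction (cosetLabel c N)
      (p := fun z => MulAction.stabilizer Γ z ∈ Z) ?_ (fun g => ?_) z
    · refine hZ.closed.preimage (continuous_induced_rng.2 (continuous_pi fun g => ?_))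
      have := (continuous_of_discreteTopology
        (f := fun k : Fin 4 × Fin 3 => decide (k.1 = 0))).comp (continuous_label c N 1 g)
      refine this.congr fun w => ?_
      simp [mem_stabilizer_iff_label_eq_zero c N hc]
    · rw [MulAction.stabilizer_smul_eq_stabilizer_map_conj, stabilizer_cosetLabel c N hc]
      exact hZ.invariant g H hH

open MeasureTheory in
lemma not_invariant_of_transport (S : Finset Γ) (hN : ∀ x, ∑ s ∈ S, (N s x : ℕ) = 2)
    (hN' : ∀ x, ∑ s ∈ S, (N s (s⁻¹ • x) : ℕ) ≤ 1)
    [MeasurableSpace (closure (translates (cosetLabel c N)))]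
    [BorelSpace (closure (translates (cosetLabel c N)))]
    (μ : Measure (closure (translates (cosetLabel c N)))) [IsProbabilityMeasure μ]
    (hμ : ∀ g : Γ, MeasurePreserving (fun x => g • x) μ μ) : False := by
  have h1 : ∀ z : closure (translates (cosetLabel c N)), ∑ s ∈ S, ((z.1 1 s).2 : ℕ) = 2 := by
    refine closure_translates_induction (cosetLabel c N) ?_ fun g => hN ((1 * g : Γ) : Γ ⧸ H)
    exact (isClosed_discrete {2}).preimage (continuous_finsetSum _ fun s _ =>
      (continuous_of_discreteTopology (f := fun k : Fin 4 × Fin 3 => (k.2 : ℕ))).comp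
        (continuous_label c N 1 s))
  have h2 : ∀ z : closure (translates (cosetLabel c N)), ∑ s ∈ S, ((z.1 s⁻¹ s).2 : ℕ) ≤ 1 := by
    refine closure_translates_induction (cosetLabel c N) ?_ fun g => hN' ((g : Γ) : Γ ⧸ H)
    exact (isClosed_discrete (Set.Iic 1)).preimage (continuous_finsetSum _ fun s _ =>
      (continuous_of_discreteTopology (f := fun k : Fin 4 × Fin 3 => (k.2 : ℕ))).comp
        (continuous_label c N s⁻¹ s))
  have hmeas : ∀ t s, Measurable fun z : closure (translates (cosetLabel c N)) =>
      (((z.1 t s).2 : ℕ) : ENNReal) := fun t s =>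
    ((continuous_of_discreteTopology (f := fun k : Fin 4 × Fin 3 => ((k.2 : ℕ) : ENNReal))).comp
      (continuous_label c N t s)).measurable
  have hinv : ∀ s, ∫⁻ z, (((z.1 s⁻¹ s).2 : ℕ) : ENNReal) ∂μ
      = ∫⁻ z, (((z.1 1 s).2 : ℕ) : ENNReal) ∂μ := fun s => by
    rw [← (hμ s⁻¹).lintegral_comp (hmeas 1 s)]
    refine lintegral_congr fun z => ?_
    have : (s⁻¹ • z).1 1 = z.1 (1 * s⁻¹) := rfl
    rw [this, one_mul]
  have e1 : ∑ s ∈ S, ∫⁻ z, (((z.1 1 s).2 : ℕ) : ENNReal) ∂μ = 2 := by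
    rw [← lintegral_finsetSum _ fun s _ => hmeas 1 s]
    simp_rw [← Nat.cast_sum, h1]
    simp
  have e2 : ∑ s ∈ S, ∫⁻ z, (((z.1 s⁻¹ s).2 : ℕ) : ENNReal) ∂μ ≤ 1 := by
    rw [← lintegral_finsetSum _ fun s _ => hmeas s⁻¹ s]
    calc _ ≤ ∫⁻ _, 1 ∂μ := lintegral_mono fun z => by
          rw [← Nat.cast_sum]
          exact (Nat.cast_le.2 (h2 z)).trans_eq Nat.cast_one
      _ = 1 := by simp
  simp_rw [hinv] at e2
  rw [e1] at e2
  norm_num at e2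

end Shift

/-- a URS `Z` of a finitely generated group is coamenable iff every
`Z`-proper system admits an invariant Borel probability measure. -/
theorem coamenable_iff_all_zproper_systems_have_invariant_measure
    {Γ : Type} [Group Γ] [Group.FG Γ]
    (Z : Set (Subgroup Γ)) (hZ : IsURS Z) :
    (∀ H ∈ Z, Coamenable H) ↔
    (∀ S : GammaSystem Γ, IsZProper Γ (X := S.X) Z → HasInvariantProbabilityMeasure S) := by
  constructor
  · intro h S hS
    obtain ⟨x⟩ := S.nonemptyX
    exact hasInvariantProbabilityMeasure_of_coamenable S x (h _ (hS x).2)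
  · intro h H hH
    by_contra hco
    have : Countable Γ := by
      obtain ⟨α, _, φ, hφ⟩ := Group.fg_iff_exists_freeGroup_hom_surjective_finite.1 ‹Group.FG Γ›
      exact hφ.countable
    have : Countable (Γ ⧸ H) := QuotientGroup.mk_surjective.countable
    obtain ⟨T, N, hN, hN'⟩ := exists_transport_of_not_coamenable H hco
    choose c hc using fun g : Γ => exists_coloring_fixedPoints
      (MulAction.toPerm g : Equiv.Perm (Γ ⧸ H))
    obtain ⟨μ, hμ, hinv⟩ := h (shiftOrbitClosure (cosetLabel c N))
      (isZProper_cosetLabel c N hc hZ hH)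
    exact @not_invariant_of_transport Γ _ H c N T hN hN' (borel _)
      (@BorelSpace.mk _ _ (borel _) rfl) μ hμ hinv
end
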